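/- Let q be a prime power with q ≡ 1 (mod 4), let a be a non-square in F_q, let C be the conic of PG(2,q) with equation Y² = XZ, and let L be the line with equation Z = aX (an external line of C). Let S be the set of exterior points of C lying on L and let Q = ⟨(1,0,−a)⟩. Then Q does not lie on L and S ∪ {Q} is an exterior set of C. -/

import Mathlib

/-!
`PG(2,F)`: points are the 1-dimensional subspaces of `F^3` (modelled as the
projectivization of `Fin 3 → F`), lines are the 2-dimensional subspaces.
-/

variable {F : Type*} [Field F]

/-- The points of `PG(2,F)`: 1-dimensional subspaces of `F^3`. -/
abbrev PGPoint (F : Type*) [Field F] := Projectivization F (Fin 3 → F)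

/-- A line of `PG(2,F)` is a 2-dimensional subspace of `F^3`. -/
def IsProjLine (F : Type*) [Field F] (L : Submodule F (Fin 3 → F)) : Prop :=
  Module.finrank F L = 2

/-- The set of projective points lying on the subspace `L`. -/
def pointsOn (L : Submodule F (Fin 3 → F)) : Set (PGPoint F) :=
  {P | P.submodule ≤ L}

/-- `S` is a set without tangents: no line of `PG(2,F)` meets `S` in exactly one point. -/
def NoTangents (S : Set (PGPoint F)) : Prop :=
  ∀ L : Submodule F (Fin 3 → F), IsProjLine F L →
    ¬ (∃! P : PGPoint F, P ∈ S ∩ pointsOn L)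

/-- The conic (zero set in `PG(2,F)`) of a quadratic form `Q` on `F^3`. -/
def conicSet (Q : QuadraticForm F (Fin 3 → F)) : Set (PGPoint F) :=
  {P | ∀ v ∈ P.submodule, Q v = 0}

/-- Nondegeneracy of a quadratic form (via its polar form). -/
def NondegQF (Q : QuadraticForm F (Fin 3 → F)) : Prop :=
  ∀ v : Fin 3 → F, (∀ w, QuadraticMap.polar Q v w = 0) → v = 0

/-- A tangent line of a point set `C`: a line meeting `C` in exactly one point. -/
def IsTangentLine (C : Set (PGPoint F)) (L : Submodule F (Fin 3 → F)) : Prop :=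
  IsProjLine F L ∧ ∃! P : PGPoint F, P ∈ C ∩ pointsOn L

/-- An external line of a point set `C`: a line meeting `C` in no point. -/
def IsExternalLine (C : Set (PGPoint F)) (L : Submodule F (Fin 3 → F)) : Prop :=
  IsProjLine F L ∧ C ∩ pointsOn L = ∅

/-- An exterior point of `C`: a point not on `C` lying on some tangent line of `C`. -/
def IsExteriorPoint (C : Set (PGPoint F)) (P : PGPoint F) : Prop :=
  P ∉ C ∧ ∃ L : Submodule F (Fin 3 → F), IsTangentLine C L ∧ P ∈ pointsOn L

/-- An interior point of `C`: a point neither on `C` nor exterior to `C`. -/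
def IsInteriorPoint (C : Set (PGPoint F)) (P : PGPoint F) : Prop :=
  P ∉ C ∧ ¬ IsExteriorPoint C P

/-- An exterior set of `C`: every line containing at least two of its points is
an external line of `C`. -/
def IsExteriorSet (C E : Set (PGPoint F)) : Prop :=
  ∀ L : Submodule F (Fin 3 → F), IsProjLine F L →
    (∃ P1 ∈ E ∩ pointsOn L, ∃ P2 ∈ E ∩ pointsOn L, P1 ≠ P2) → IsExternalLine C L

/-- The conic of `PG(2,F)` with equation `Y² = XZ`. -/
def conicYsqXZ (F : Type*) [Field F] : Set (PGPoint F) :=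
  {P | ∀ v ∈ P.submodule, (v 1) ^ 2 = v 0 * v 2}

/-- The line of `PG(2,F)` with equation `Z = aX`. -/
def lineZeqaX (a : F) : Submodule F (Fin 3 → F) :=
  LinearMap.ker ((LinearMap.proj 2 : (Fin 3 → F) →ₗ[F] F) -
    a • (LinearMap.proj 0 : (Fin 3 → F) →ₗ[F] F))

/-- The point `⟨(1, 0, -a)⟩` of `PG(2,F)`. -/
noncomputable def ptQ (F : Type*) [Field F] (a : F) : PGPoint F :=
  Projectivization.mk F ![1, 0, -a] (by intro hv; simpa using congrFun hv 0)

theorem mk_mem_pointsOn {L : Submodule F (Fin 3 → F)} {v : Fin 3 → F} (hv : v ≠ 0) :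
    Projectivization.mk F v hv ∈ pointsOn L ↔ v ∈ L := by
  simp [pointsOn, Projectivization.submodule_mk]

theorem mk_mem_conicYsqXZ {v : Fin 3 → F} (hv : v ≠ 0) :
    Projectivization.mk F v hv ∈ conicYsqXZ F ↔ v 1 ^ 2 = v 0 * v 2 := by
  simp only [conicYsqXZ, Set.mem_ofPred_eq, Projectivization.submodule_mk,
    Submodule.mem_span_singleton]
  constructor
  · exact fun h => h v ⟨1, one_smul F v⟩
  · rintro h _ ⟨c, rfl⟩
    simp only [Pi.smul_apply, smul_eq_mul]
    linear_combination c ^ 2 * h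

theorem mem_lineZeqaX {a : F} {v : Fin 3 → F} : v ∈ lineZeqaX a ↔ v 2 = a * v 0 := by
  simp [lineZeqaX, sub_eq_zero]

/-- A point polar to a point of the conic has square discriminant. -/
theorem isSquare_of_polar_eq_zero {v w : Fin 3 → F} (hw : w ≠ 0) (hc : w 1 ^ 2 = w 0 * w 2)
    (h : 2 * v 1 * w 1 - v 0 * w 2 - v 2 * w 0 = 0) : IsSquare (v 1 ^ 2 - v 0 * v 2) := by
  by_cases h0 : w 0 = 0
  · have h1 : w 1 = 0 := by simpa [h0] using hc
    have h2 : w 2 ≠ 0 := by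
      intro h2
      apply hw
      ext i
      fin_cases i <;> simp [h0, h1, h2]
    have hv : v 0 = 0 := by simpa [h0, h1, h2] using h
    exact ⟨v 1, by simp [hv, sq]⟩
  · refine ⟨(v 1 * w 0 - v 0 * w 1) / w 0, ?_⟩
    field_simp
    linear_combination (-(v 0) ^ 2) * hc + v 0 * w 0 * h

theorem isSquare_of_isExteriorPoint {v : Fin 3 → F} (hv : v ≠ 0)
    (h : IsExteriorPoint (conicYsqXZ F) (Projectivization.mk F v hv)) :
    IsSquare (v 1 ^ 2 - v 0 * v 2) := by
  obtain ⟨hnc, T, ⟨-, R, ⟨hRC, hRT⟩, huniq⟩, hvT⟩ := h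
  induction R using Projectivization.ind with
  | h w hw =>
  rw [mk_mem_conicYsqXZ] at hnc hRC
  rw [mk_mem_pointsOn] at hRT hvT
  have hspan (c : F) : v ≠ c • w := by
    rintro rfl
    apply hnc
    simp only [Pi.smul_apply, smul_eq_mul]
    linear_combination c ^ 2 * hRC
  apply isSquare_of_polar_eq_zero hw hRC
  by_contra hB
  set B := 2 * v 1 * w 1 - v 0 * w 2 - v 2 * w 0 with hBdef
  set t := -(v 1 ^ 2 - v 0 * v 2) / B with ht
  have htB : t * B = -(v 1 ^ 2 - v 0 * v 2) := div_mul_cancel₀ _ hB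
  have hne : v + t • w ≠ 0 := fun h0 =>
    hspan (-t) (by rw [neg_smul]; exact eq_neg_of_add_eq_zero_left h0)
  have heq := huniq (Projectivization.mk F (v + t • w) hne) ⟨by
    rw [mk_mem_conicYsqXZ]
    simp only [Pi.add_apply, Pi.smul_apply, smul_eq_mul]
    linear_combination htB + t ^ 2 * hRC - t * hBdef, by
    rw [mk_mem_pointsOn]
    exact T.add_mem hvT (T.smul_mem t hRT)⟩
  obtain ⟨c, hc⟩ := (Projectivization.mk_eq_mk_iff' F _ _ hne hw).1 heq
  exact hspan (c - t) (by rw [sub_smul, hc, add_sub_cancel_right])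

/-- Every vector of a projective line is a combination of two distinct points on it. -/
theorem IsProjLine.exists_eq_add {L : Submodule F (Fin 3 → F)} (hL : IsProjLine F L)
    {v w : Fin 3 → F} (hv : v ≠ 0) (hw : w ≠ 0) (hvL : v ∈ L) (hwL : w ∈ L)
    (hne : Projectivization.mk F v hv ≠ Projectivization.mk F w hw) {u : Fin 3 → F}
    (hu : u ∈ L) : ∃ c d : F, u = c • v + d • w := by
  have hli : LinearIndependent F ![v, w] := by
    rw [linearIndependent_fin2]
    refine ⟨hw, fun c hc => hne ?_⟩
    exact (Projectivization.mk_eq_mk_iff' F _ _ hv hw).2 ⟨c, hc⟩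
  have hspan : Submodule.span F {v, w} = L := by
    apply Submodule.eq_of_le_of_finrank_eq
    · rw [Submodule.span_le]
      rintro x (rfl | rfl) <;> assumption
    · have := finrank_span_eq_card hli
      rw [Matrix.range_cons_cons_empty] at this
      rw [this, hL, Fintype.card_fin]
  rw [← hspan, Submodule.mem_span_pair] at hu
  obtain ⟨c, d, h⟩ := hu
  exact ⟨c, d, h.symm⟩

/-- The line joining `⟨(1, 0, -a)⟩` to an exterior point of the line `Z = aX` is external. -/
theorem eq_zero_of_mem_conicYsqXZ_of_eq_add {a : F} (ha : ¬ IsSquare a)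
    (hneg : IsSquare (-1 : F)) {v u : Fin 3 → F} (hv : v 2 = a * v 0)
    (hs : IsSquare (v 1 ^ 2 - v 0 * v 2)) {c d : F} (hu : u = c • v + d • ![1, 0, -a])
    (hc : u 1 ^ 2 = u 0 * u 2) : u = 0 := by
  have ha0 (x y : F) (h : y ^ 2 = a * x ^ 2) : x = 0 := by
    by_contra hx
    exact ha ⟨y / x, by field_simp; exact h.symm⟩
  obtain ⟨i, hi⟩ := hneg
  obtain ⟨s, hs⟩ := hs
  subst hu
  simp [hv] at hc hs
  have hd : d = 0 := ha0 d (c * i * s) (by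
    linear_combination c ^ 2 * s ^ 2 * (-hi) - hc + c ^ 2 * hs)
  have h0 : c * v 0 = 0 := ha0 _ (c * v 1) (by subst hd; linear_combination hc)
  have h1 : c * v 1 = 0 := by simpa [hd, h0] using hc
  ext j
  fin_cases j <;> simp [hd, h0, h1, hv]
  rcases mul_eq_zero.1 h0 with h | h <;> simp [h]

/-- `q ≡ 1 (mod 4)`, `a` a non-square; for the conic `Y² = XZ` and
the external line `L : Z = aX`, the point `Q₀ = ⟨(1,0,-a)⟩` does not lie on `L`
and the exterior points on `L` together with `Q₀` form an exterior set. -/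
theorem stmt_14 [Fintype F] (hq : Fintype.card F % 4 = 1)
    (a : F) (ha : ¬ IsSquare a) :
    ptQ F a ∉ pointsOn (lineZeqaX a) ∧
      IsExteriorSet (conicYsqXZ F)
        ({P ∈ pointsOn (lineZeqaX a) | IsExteriorPoint (conicYsqXZ F) P} ∪ {ptQ F a}) := by
  have hcard : Fintype.card F % 4 ≠ 3 := by omega
  have hneg : IsSquare (-1 : F) := FiniteField.isSquare_neg_one_iff.2 hcard
  have htwo : (2 : F) ≠ 0 := by
    apply Ring.two_ne_zero
    intro h
    have := FiniteField.even_card_of_char_two h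
    omega
  have ha0 : a ≠ 0 := by
    rintro rfl
    exact ha IsSquare.zero
  refine ⟨?_, ?_⟩
  · rw [ptQ, mk_mem_pointsOn, mem_lineZeqaX]
    simp only [Matrix.cons_val, mul_one]
    intro h
    exact mul_ne_zero htwo ha0 (by linear_combination -h)
  rintro L hL ⟨P, ⟨hPE, hPL⟩, R, ⟨hRE, hRL⟩, hne⟩
  refine ⟨hL, Set.eq_empty_iff_forall_notMem.2 ?_⟩
  rintro U ⟨hUC, hUL⟩
  induction U using Projectivization.ind with
  | h u hu =>
  induction P using Projectivization.ind with
  | h v hv =>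
  induction R using Projectivization.ind with
  | h w hw =>
  rw [mk_mem_conicYsqXZ] at hUC
  rw [mk_mem_pointsOn] at hPL hRL hUL
  have hQ {x y : Fin 3 → F} (hx : x ≠ 0) (hy : y ≠ 0) (hxL : x ∈ L) (hyL : y ∈ L)
      (hxy : Projectivization.mk F x hx ≠ Projectivization.mk F y hy)
      (hxl : Projectivization.mk F x hx ∈ pointsOn (lineZeqaX a))
      (hxE : IsExteriorPoint (conicYsqXZ F) (Projectivization.mk F x hx))
      (hyQ : Projectivization.mk F y hy = ptQ F a) : False := by
    rw [mk_mem_pointsOn, mem_lineZeqaX] at hxl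
    obtain ⟨c, d, hcd⟩ := hL.exists_eq_add hx hy hxL hyL hxy hUL
    obtain ⟨k, hk⟩ := (Projectivization.mk_eq_mk_iff' F _ _ hy _).1 hyQ
    rw [← hk, smul_smul] at hcd
    exact hu (eq_zero_of_mem_conicYsqXZ_of_eq_add ha hneg hxl
      (isSquare_of_isExteriorPoint hx hxE) hcd hUC)
  rcases hPE with ⟨hPl, hPE⟩ | hPQ <;> rcases hRE with ⟨hRl, hRE⟩ | hRQ
  · rw [mk_mem_pointsOn] at hPl hRl
    obtain ⟨c, d, hcd⟩ := hL.exists_eq_add hv hw hPL hRL hne hUL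
    have hul : u ∈ lineZeqaX a :=
      hcd ▸ Submodule.add_mem _ (Submodule.smul_mem _ c hPl) (Submodule.smul_mem _ d hRl)
    rw [mem_lineZeqaX] at hul
    by_cases h0 : u 0 = 0
    · apply hu
      have h1 : u 1 = 0 := by simpa [h0] using hUC
      ext j
      fin_cases j <;> simp [h0, h1, hul]
    · exact ha ⟨u 1 / u 0, by field_simp; linear_combination -hUC - u 0 * hul⟩
  · exact hQ hv hw hPL hRL hne hPl hPE hRQ
  · exact hQ hw hv hRL hPL hne.symm hRl hRE hPQ
  · exact hne (hPQ.trans hRQ.symm)
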